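/- arXiv:1412.4203 — 2 statements merged into one kernel-verified Lean document; each statement's English description precedes it below -/
import Mathlib

section
/- Let (Ω_1, μ_1), …, (Ω_M, μ_M) and (Δ, 𝒜, P) be probability spaces, let X_1, …, X_M be measurable spaces, and for each i let x_i : Ω_i × ⋯ × Ω_M → X_i be measurable maps. Let V_i ⊆ X_i × X_{i+1} × Δ for i < M and V_M ⊆ X_M × Δ be measurable 'violation' sets (all relevant sections measurable). Let ε_1, …, ε_M, β_1, …, β_M ∈ (0,1). Assume: (i) μ_M({ω_M : P({δ : (x_M(ω_M), δ) ∈ V_M}) ≤ ε_M}) ≥ 1 - β_M; and (ii) for every i < M and every fixed (ω_{i+1}, …, ω_M), μ_i({ω_i : P({δ : (x_i(ω_i, …, ω_M), x_{i+1}(ω_{i+1}, …, ω_M), δ) ∈ V_i}) ≤ ε_i}) ≥ 1 - β_i. Then the product measure μ_1 ⊗ ⋯ ⊗ μ_M of the set of (ω_1, …, ω_M) such that P({δ : (x_M(ω_M), δ) ∈ V_M, or (x_i(ω_i,…,ω_M), x_{i+1}(ω_{i+1},…,ω_M), δ) ∈ V_i for some i < M}) ≤ Σ_{i=1}^M ε_i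 is at least 1 - Σ_{i=1}^M β_i. -/
open MeasureTheory

lemma pi_compl_le_of_update {ι : Type*} [Fintype ι] [DecidableEq ι] {Ω : ι → Type*}
    [∀ i, MeasurableSpace (Ω i)] (μ : (i : ι) → Measure (Ω i)) [∀ i, IsProbabilityMeasure (μ i)]
    (j : ι) (S : Set ((i : ι) → Ω i)) (hS : MeasurableSet S) (b : ENNReal)
    (h : ∀ ω : (i : ι) → Ω i, 1 - b ≤ μ j {w | Function.update ω j w ∈ S}) :
    Measure.pi μ Sᶜ ≤ b := by
  have hb : ∀ ω : (i : ι) → Ω i, μ j {w | Function.update ω j w ∈ Sᶜ} ≤ b := by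
    intro ω
    have hm : MeasurableSet {w | Function.update ω j w ∈ S} := measurable_update ω hS
    have : {w | Function.update ω j w ∈ Sᶜ} = {w | Function.update ω j w ∈ S}ᶜ := rfl
    rw [this, prob_compl_eq_one_sub hm, tsub_le_iff_right, add_comm]
    exact tsub_le_iff_right.1 (h ω)
  by_cases hne : Nonempty ((i : ι) → Ω i)
  · obtain ⟨ω₀⟩ := hne
    rw [← lintegral_indicator_one hS.compl, lintegral_eq_lmarginal_univ ω₀,
      lmarginal_erase' _ (measurable_one.indicator hS.compl) (Finset.mem_univ j)]
    calc _ ≤ (∫⋯∫⁻_(Finset.univ.erase j), (fun _ => b) ∂μ) ω₀ := by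
            refine lmarginal_mono (fun ω => ?_) ω₀
            refine le_trans (le_of_eq ?_) (hb ω)
            exact lintegral_indicator_one (μ := μ j)
              (s := {w | Function.update ω j w ∈ Sᶜ}) (measurable_update ω hS.compl)
      _ = b := by simp [lmarginal]
  · have : Sᶜ = ∅ := Set.eq_empty_of_forall_notMem fun x _ => hne ⟨x⟩
    simp [this]

/-- Abstract form of the recursive scenario approach with re-sampling (probabilistic
composition argument), for `M = m + 1` stages: each stage `i` uses an independent
randomization `ω i ∈ Ω i`; the decision `x i` at stage `i` depends only on the
randomizations of stages `≥ i`. If, conditionally on the later stages, the stage-`i`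
decision satisfies its chance constraint (w.r.t. the violation set `V i`, resp. `VM`
for the last stage) at level `ε_i` with confidence `1 - β_i`, then under the product
measure the joint chance constraint holds at level `∑ ε_i` with confidence
`1 - ∑ β_i`. -/
theorem abstract_recursive_composition
    {Δ : Type*} [MeasurableSpace Δ] (P : Measure Δ) [IsProbabilityMeasure P]
    (m : ℕ)
    (Ωs : Fin (m + 1) → Type*) [∀ i, MeasurableSpace (Ωs i)]
    (μs : (i : Fin (m + 1)) → Measure (Ωs i)) [∀ i, IsProbabilityMeasure (μs i)]
    (Xt : Fin (m + 1) → Type*) [∀ i, MeasurableSpace (Xt i)]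
    (xs : (i : Fin (m + 1)) → ((k : Fin (m + 1)) → Ωs k) → Xt i)
    (hxmeas : ∀ i, Measurable (xs i))
    -- the stage-`i` decision depends only on the randomizations of stages `i, …, M`:
    (hdep : ∀ (i : Fin (m + 1)) (ω ω' : (k : Fin (m + 1)) → Ωs k),
      (∀ k, i ≤ k → ω k = ω' k) → xs i ω = xs i ω')
    (Vs : (i : Fin m) → Set (Xt i.castSucc × Xt i.succ × Δ))
    (VM : Set (Xt (Fin.last m) × Δ))
    (hVmeas : ∀ i, MeasurableSet (Vs i)) (hVMmeas : MeasurableSet VM)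
    (εs βs : Fin (m + 1) → ℝ)
    (hεs : ∀ i, εs i ∈ Set.Ioo (0 : ℝ) 1) (hβs : ∀ i, βs i ∈ Set.Ioo (0 : ℝ) 1)
    -- (i) last-stage guarantee (the last-stage decision depends only on `ω (last)`):
    (hlast : ∀ ωfix : (k : Fin (m + 1)) → Ωs k,
      1 - ENNReal.ofReal (βs (Fin.last m)) ≤
        μs (Fin.last m) {w | P {δ |
            (xs (Fin.last m) (Function.update ωfix (Fin.last m) w), δ) ∈ VM} ≤
          ENNReal.ofReal (εs (Fin.last m))})
    -- (ii) stage-wise guarantee, conditionally on every fixed tail randomization: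
    (hstage : ∀ (i : Fin m) (ωfix : (k : Fin (m + 1)) → Ωs k),
      1 - ENNReal.ofReal (βs i.castSucc) ≤
        μs i.castSucc {w | P {δ |
            (xs i.castSucc (Function.update ωfix i.castSucc w),
              xs i.succ ωfix, δ) ∈ Vs i} ≤
          ENNReal.ofReal (εs i.castSucc)}) :
    1 - ENNReal.ofReal (∑ i, βs i) ≤
      (Measure.pi μs) {ω | P {δ | (xs (Fin.last m) ω, δ) ∈ VM ∨
          ∃ i : Fin m, (xs i.castSucc ω, xs i.succ ω, δ) ∈ Vs i} ≤
        ENNReal.ofReal (∑ i, εs i)} := by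
  have hml : Measurable fun ω => P {δ | (xs (Fin.last m) ω, δ) ∈ VM} := by
    have h1 : MeasurableSet {p : ((k : Fin (m + 1)) → Ωs k) × Δ |
        (xs (Fin.last m) p.1, p.2) ∈ VM} :=
      (((hxmeas _).comp measurable_fst).prodMk measurable_snd) hVMmeas
    exact measurable_measure_prodMk_left h1
  have hmi : ∀ i : Fin m, Measurable fun ω =>
      P {δ | (xs i.castSucc ω, xs i.succ ω, δ) ∈ Vs i} := by
    intro i
    have h1 : MeasurableSet {p : ((k : Fin (m + 1)) → Ωs k) × Δ |
        (xs i.castSucc p.1, xs i.succ p.1, p.2) ∈ Vs i} :=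
      (((hxmeas _).comp measurable_fst).prodMk
        (((hxmeas _).comp measurable_fst).prodMk measurable_snd)) (hVmeas i)
    exact measurable_measure_prodMk_left h1
  set GoodL : Set ((k : Fin (m + 1)) → Ωs k) := {ω | P {δ | (xs (Fin.last m) ω, δ) ∈ VM} ≤
    ENNReal.ofReal (εs (Fin.last m))} with hGL
  set G : Fin m → Set ((k : Fin (m + 1)) → Ωs k) := fun i =>
    {ω | P {δ | (xs i.castSucc ω, xs i.succ ω, δ) ∈ Vs i} ≤
      ENNReal.ofReal (εs i.castSucc)} with hG
  have hGLm : MeasurableSet GoodL := measurableSet_le hml measurable_const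
  have hGm : ∀ i, MeasurableSet (G i) := fun i => measurableSet_le (hmi i) measurable_const
  have hBL : Measure.pi μs GoodLᶜ ≤ ENNReal.ofReal (βs (Fin.last m)) :=
    pi_compl_le_of_update μs (Fin.last m) GoodL hGLm _ hlast
  have hB : ∀ i, Measure.pi μs (G i)ᶜ ≤ ENNReal.ofReal (βs i.castSucc) := by
    intro i
    refine pi_compl_le_of_update μs i.castSucc (G i) (hGm i) _ fun ω => ?_
    refine (hstage i ω).trans (le_of_eq ?_)
    congr 1
    ext w
    have : xs i.succ (Function.update ω i.castSucc w) = xs i.succ ω := by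
      refine hdep _ _ _ fun k hk => Function.update_of_ne ?_ _ _
      exact (lt_of_lt_of_le Fin.castSucc_lt_succ hk).ne'
    simp only [hG, Set.mem_ofPred_eq, this]
  have hint : GoodL ∩ ⋂ i, G i ⊆ {ω | P {δ | (xs (Fin.last m) ω, δ) ∈ VM ∨
          ∃ i : Fin m, (xs i.castSucc ω, xs i.succ ω, δ) ∈ Vs i} ≤
        ENNReal.ofReal (∑ i, εs i)} := by
    rintro ω ⟨h1, h2⟩
    rw [Set.mem_iInter] at h2
    rw [Set.mem_ofPred_eq, ENNReal.ofReal_sum_of_nonneg fun i _ => (hεs i).1.le,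
      Fin.sum_univ_castSucc, add_comm]
    have : {δ | (xs (Fin.last m) ω, δ) ∈ VM ∨
          ∃ i : Fin m, (xs i.castSucc ω, xs i.succ ω, δ) ∈ Vs i} =
        {δ | (xs (Fin.last m) ω, δ) ∈ VM} ∪
          ⋃ i : Fin m, {δ | (xs i.castSucc ω, xs i.succ ω, δ) ∈ Vs i} := by
      ext δ; simp
    rw [this]
    refine (measure_union_le _ _).trans (add_le_add h1 ?_)
    exact (measure_iUnion_fintype_le _ _).trans (Finset.sum_le_sum fun i _ => h2 i)
  refine le_trans ?_ (measure_mono hint)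
  have hmeas : MeasurableSet (GoodL ∩ ⋂ i, G i) := hGLm.inter (MeasurableSet.iInter hGm)
  have hc : Measure.pi μs (GoodL ∩ ⋂ i, G i)ᶜ ≤ ENNReal.ofReal (∑ i, βs i) := by
    rw [ENNReal.ofReal_sum_of_nonneg fun i _ => (hβs i).1.le,
      Fin.sum_univ_castSucc, add_comm (Finset.sum _ _), Set.compl_inter, Set.compl_iInter]
    refine (measure_union_le _ _).trans (add_le_add hBL ?_)
    exact (measure_iUnion_fintype_le _ _).trans (Finset.sum_le_sum fun i _ => hB i)
  rw [tsub_le_iff_right, ← prob_add_prob_compl (μ := Measure.pi μs) hmeas]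
  exact add_le_add le_rfl hc
end

section
/- Let d be a positive integer and ε, β ∈ (0,1). If N is a natural number with N ≥ (e/(e-1))·(1/ε)·(d - 1 + ln(1/β)), then Σ_{i=0}^{d-1} (N choose i) ε^i (1-ε)^{N-i} ≤ β. -/
/-- The binomial tail `B(N, ε, d) = ∑_{i=0}^{d-1} (N choose i) ε^i (1-ε)^(N-i)`. -/
noncomputable def binomTail (N : ℕ) (ε : ℝ) (d : ℕ) : ℝ :=
  ∑ i ∈ Finset.range d, (N.choose i : ℝ) * ε ^ i * (1 - ε) ^ (N - i)

/-- Explicit sample-size bound of Alamo et al.: if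
`N ≥ (e/(e-1)) (1/ε) (d - 1 + ln(1/β))`, then `B(N, ε, d) ≤ β`. -/
theorem binomTail_le_of_alamo_bound
    (d : ℕ) (hd : 0 < d) (ε β : ℝ) (hε : ε ∈ Set.Ioo (0 : ℝ) 1)
    (hβ : β ∈ Set.Ioo (0 : ℝ) 1) (N : ℕ)
    (hN : Real.exp 1 / (Real.exp 1 - 1) * (1 / ε) * ((d : ℝ) - 1 + Real.log (1 / β))
      ≤ (N : ℝ)) :
    binomTail N ε d ≤ β := by
  obtain ⟨hε0, hε1⟩ := hε
  obtain ⟨hβ0, hβ1⟩ := hβ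
  have he : (1 : ℝ) < Real.exp 1 := by
    have := Real.add_one_lt_exp (one_ne_zero (α := ℝ))
    linarith
  have hinv : Real.exp (-1) * Real.exp 1 = 1 := by
    rw [← Real.exp_add]; norm_num
  have h1ε : 0 ≤ 1 - ε := by linarith
  have hpos : 0 < Real.exp (-1) := Real.exp_pos _
  have step1 : binomTail N ε d ≤ Real.exp ((d : ℝ) - 1) *
      ∑ i ∈ Finset.range d, (ε * Real.exp (-1)) ^ i * (1 - ε) ^ (N - i) * (N.choose i : ℝ) := by
    unfold binomTail
    rw [Finset.mul_sum]
    apply Finset.sum_le_sum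
    intro i hi
    have hid : i + 1 ≤ d := Finset.mem_range.mp hi
    have hid' : (i : ℝ) + 1 ≤ d := by exact_mod_cast hid
    have h1 : 1 ≤ Real.exp ((d : ℝ) - 1) * Real.exp (-1) ^ i := by
      rw [← Real.exp_nat_mul, ← Real.exp_add]
      apply Real.one_le_exp
      linarith
    have hnn : 0 ≤ (N.choose i : ℝ) * ε ^ i * (1 - ε) ^ (N - i) := by positivity
    calc (N.choose i : ℝ) * ε ^ i * (1 - ε) ^ (N - i)
        ≤ ((N.choose i : ℝ) * ε ^ i * (1 - ε) ^ (N - i)) *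
          (Real.exp ((d : ℝ) - 1) * Real.exp (-1) ^ i) := le_mul_of_one_le_right hnn h1
      _ = _ := by rw [mul_pow]; ring
  have step2 : ∑ i ∈ Finset.range d,
      (ε * Real.exp (-1)) ^ i * (1 - ε) ^ (N - i) * (N.choose i : ℝ)
      ≤ (ε * Real.exp (-1) + (1 - ε)) ^ N := by
    rw [add_pow]
    have hsub : Finset.range (N + 1) ⊆ Finset.range (max d (N + 1)) :=
      Finset.range_subset_range.mpr (le_max_right _ _)
    rw [Finset.sum_subset hsub]
    · apply Finset.sum_le_sum_of_subset_of_nonneg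
      · exact Finset.range_subset_range.mpr (le_max_left _ _)
      · intro i _ _
        positivity
    · intro i _ hi
      rw [Finset.mem_range] at hi
      rw [Nat.choose_eq_zero_of_lt (by omega)]
      simp
  have step3 : (ε * Real.exp (-1) + (1 - ε)) ^ N
      ≤ Real.exp (-(N * (ε * (1 - Real.exp (-1))))) := by
    have h := Real.add_one_le_exp (-(ε * (1 - Real.exp (-1))))
    calc (ε * Real.exp (-1) + (1 - ε)) ^ N
        ≤ (Real.exp (-(ε * (1 - Real.exp (-1))))) ^ N := by
          apply pow_le_pow_left₀ (by positivity)
          linarith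
      _ = _ := by rw [← Real.exp_nat_mul]; congr 1; ring
  have step4 : (d : ℝ) - 1 - Real.log β ≤ N * (ε * (1 - Real.exp (-1))) := by
    have hq : 0 < Real.exp 1 - 1 := by linarith
    have hi : Real.exp (-1) = 1 / Real.exp 1 := by
      rw [Real.exp_neg, one_div]
    have hc : 0 ≤ ε * (1 - Real.exp (-1)) := by
      have : Real.exp (-1) < 1 := by nlinarith
      apply mul_nonneg hε0.le; linarith
    have h := mul_le_mul_of_nonneg_right hN hc
    refine le_trans (le_of_eq ?_) h
    rw [one_div β, Real.log_inv, hi]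
    have := Real.exp_pos 1
    field_simp
    ring
  calc binomTail N ε d ≤ Real.exp ((d : ℝ) - 1) * Real.exp (-(N * (ε * (1 - Real.exp (-1))))) :=
        step1.trans (mul_le_mul_of_nonneg_left (step2.trans step3) (Real.exp_pos _).le)
    _ ≤ Real.exp (Real.log β) := by
        rw [← Real.exp_add]
        apply Real.exp_le_exp.mpr
        linarith
    _ = β := Real.exp_log hβ0
end
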